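/- For the critical Curie–Weiss model (β = 1, h = 0), the partition function satisfies lim_{N→∞} Z_N / (2^N N^{1/4}) = (2π)^{−1/2} ∫_{−∞}^{∞} exp(−u⁴/12) du = 12^{1/4} Γ(1/4) / (2√(2π)). -/

import Mathlib

open Filter Real MeasureTheory

/-!
Linearizing the square of the total spin by a Gaussian integral (Hubbard–Stratonovich) decouples the
spins and gives `Z_N = 2 ^ N * √(N / (2π)) * ∫ t, exp (-N * φ t)`, where
`φ t = t ^ 2 / 2 - log (cosh t)`. At `β = 1` the quadratic terms of `φ` cancel: `φ'' = tanh ^ 2`, so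
`φ t ~ t ^ 4 / 12` at its unique minimum `0`. Laplace's method at this degenerate minimum, that is,
the substitution `t = N ^ (-1 / 4) * u`, makes the integral asymptotic to
`N ^ (-1 / 4) * ∫ u, exp (-u ^ 4 / 12)`, and the latter integral is a Gamma value.
-/

open Asymptotics Topology
open Module (finrank)

section Laplace

theorem tendsto_rpow_mul_setIntegral_exp_neg_mul_zero {α : Type*} [MeasurableSpace α]
    {μ : Measure α} {S : Set α} {φ : α → ℝ} {m : ℝ} (s : ℝ) (hS : MeasurableSet S) (hm : 0 < m)
    (hφ : ∀ t ∈ S, m ≤ φ t) (hint : IntegrableOn (fun t ↦ exp (-φ t)) S μ) :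
    Tendsto (fun x : ℝ ↦ x ^ s * ∫ t in S, exp (-(x * φ t)) ∂μ) atTop (𝓝 0) := by
  set C := exp m * ∫ t in S, exp (-φ t) ∂μ
  have hbound : ∀ x ≥ (1 : ℝ), ∫ t in S, exp (-(x * φ t)) ∂μ ≤ exp (-m * x) * C := by
    intro x hx
    have hpt : ∀ t ∈ S, exp (-(x * φ t)) ≤ exp (-m * x) * exp m * exp (-φ t) := by
      intro t ht
      rw [← exp_add, ← exp_add, exp_le_exp]
      nlinarith [hφ t ht]
    calc ∫ t in S, exp (-(x * φ t)) ∂μ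
        ≤ ∫ t in S, exp (-m * x) * exp m * exp (-φ t) ∂μ :=
          integral_mono_of_nonneg (.of_forall fun _ ↦ (exp_pos _).le) (hint.const_mul _)
            (ae_restrict_of_forall_mem hS hpt)
      _ = exp (-m * x) * C := by rw [integral_const_mul, mul_assoc]
  have hlim : Tendsto (fun x : ℝ ↦ x ^ s * exp (-m * x) * C) atTop (𝓝 0) := by
    simpa only [zero_mul] using (tendsto_rpow_mul_exp_neg_mul_atTop_nhds_zero s m hm).mul_const C
  refine tendsto_of_tendsto_of_tendsto_of_le_of_le' tendsto_const_nhds hlim ?_ ?_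
  · filter_upwards [eventually_ge_atTop 0] with x hx
    positivity
  · filter_upwards [eventually_ge_atTop 1] with x hx
    rw [mul_assoc]
    gcongr
    exact hbound x hx

variable {E : Type*} [NormedAddCommGroup E]

theorem exists_ball_half_mul_norm_rpow_le {φ : E → ℝ} {a p : ℝ} (ha : 0 ≤ a)
    (hφ : φ ~[𝓝 0] fun t ↦ a * ‖t‖ ^ p) :
    ∃ δ > 0, ∀ t ∈ Metric.ball (0 : E) δ, a / 2 * ‖t‖ ^ p ≤ φ t := by
  refine Metric.eventually_nhds_iff_ball.1 ?_
  filter_upwards [hφ.isLittleO.bound one_half_pos] with t ht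
  have hnonneg : 0 ≤ a * ‖t‖ ^ p := by positivity
  rw [norm_of_nonneg hnonneg, Pi.sub_apply, norm_eq_abs] at ht
  linarith [neg_abs_le (φ t - a * ‖t‖ ^ p)]

variable [NormedSpace ℝ E]

theorem mul_norm_smul_rpow {x p : ℝ} (hx : 0 < x) (hp : p ≠ 0) (u : E) :
    x * ‖(x ^ p⁻¹)⁻¹ • u‖ ^ p = ‖u‖ ^ p := by
  have hr : 0 ≤ (x ^ p⁻¹)⁻¹ := by positivity
  rw [norm_smul, norm_of_nonneg hr, mul_rpow hr (norm_nonneg u), inv_rpow (by positivity),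
    rpow_inv_rpow hx.le hp, mul_inv_cancel_left₀ hx.ne']

theorem tendsto_inv_rpow_inv_smul {p : ℝ} (hp : 0 < p) (u : E) :
    Tendsto (fun x : ℝ ↦ (x ^ p⁻¹)⁻¹ • u) atTop (𝓝 0) := by
  simpa only [zero_smul, Function.comp_apply] using
    (tendsto_inv_atTop_zero.comp (tendsto_rpow_atTop (inv_pos.2 hp))).smul_const u

theorem tendsto_mul_comp_smul {φ : E → ℝ} {a p : ℝ} (hp : 0 < p)
    (hφ : φ ~[𝓝 0] fun t ↦ a * ‖t‖ ^ p) (u : E) :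
    Tendsto (fun x : ℝ ↦ x * φ ((x ^ p⁻¹)⁻¹ • u)) atTop (𝓝 (a * ‖u‖ ^ p)) := by
  have hequiv := (IsEquivalent.refl (u := fun x : ℝ ↦ x)).mul
    (hφ.comp_tendsto (tendsto_inv_rpow_inv_smul hp u))
  refine hequiv.symm.tendsto_nhds (tendsto_const_nhds.congr' ?_)
  filter_upwards [eventually_gt_atTop 0] with x hx
  simp only [Pi.mul_apply, Function.comp_apply]
  rw [mul_left_comm, mul_norm_smul_rpow hx hp.ne']

variable [FiniteDimensional ℝ E] [MeasurableSpace E] [BorelSpace E] {μ : Measure E}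
  [μ.IsAddHaarMeasure]

theorem integrable_exp_neg_mul_norm_rpow [Nontrivial E] {b p : ℝ} (hb : 0 < b) (hp : 0 < p) :
    Integrable (fun u : E ↦ exp (-b * ‖u‖ ^ p)) μ := by
  refine (integrable_fun_norm_addHaar μ (f := fun r ↦ exp (-b * r ^ p))).2 ?_
  have hs : (-1 : ℝ) < (finrank ℝ E - 1 : ℕ) := neg_one_lt_zero.trans_le (Nat.cast_nonneg _)
  simpa only [rpow_natCast, smul_eq_mul] using integrableOn_rpow_mul_exp_neg_mul_rpow hs hp hb

theorem rpow_mul_integral_eq_integral_comp_smul {x : ℝ} (hx : 0 < x) (p : ℝ) (f : E → ℝ) :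
    x ^ (finrank ℝ E / p) * ∫ t, f t ∂μ = ∫ u, f ((x ^ p⁻¹)⁻¹ • u) ∂μ := by
  rw [Measure.integral_comp_inv_smul_of_nonneg μ f (rpow_nonneg hx.le _), ← rpow_natCast,
    ← rpow_mul hx.le, smul_eq_mul, div_eq_inv_mul]

theorem tendsto_rpow_mul_setIntegral_exp_neg_mul [Nontrivial E] {S : Set E} {φ : E → ℝ} {a b p : ℝ}
    (hS : MeasurableSet S) (hS0 : S ∈ 𝓝 0) (hb : 0 < b) (hp : 0 < p)
    (hφ : φ ~[𝓝 0] fun t ↦ a * ‖t‖ ^ p) (hle : ∀ t ∈ S, b * ‖t‖ ^ p ≤ φ t)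
    (hmeas : AEMeasurable φ μ) :
    Tendsto (fun x : ℝ ↦ x ^ (finrank ℝ E / p) * ∫ t in S, exp (-(x * φ t)) ∂μ) atTop
      (𝓝 (∫ u, exp (-(a * ‖u‖ ^ p)) ∂μ)) := by
  set F : ℝ → E → ℝ := fun x ↦ S.indicator fun t ↦ exp (-(x * φ t))
  have hscale : ∀ᶠ x : ℝ in atTop, ∫ u, F x ((x ^ p⁻¹)⁻¹ • u) ∂μ =
      x ^ (finrank ℝ E / p) * ∫ t in S, exp (-(x * φ t)) ∂μ := by
    filter_upwards [eventually_gt_atTop 0] with x hx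
    rw [← rpow_mul_integral_eq_integral_comp_smul hx, integral_indicator hS]
  refine Tendsto.congr' hscale ?_
  refine tendsto_integral_filter_of_dominated_convergence (fun u ↦ exp (-b * ‖u‖ ^ p))
    ?_ ?_ (integrable_exp_neg_mul_norm_rpow hb hp) (.of_forall fun u ↦ ?_)
  · filter_upwards [eventually_gt_atTop 0] with x hx
    have hF : AEMeasurable (F x) μ := ((hmeas.const_mul x).neg.exp).indicator hS
    have hr : (x ^ p⁻¹)⁻¹ ≠ 0 := by positivity
    exact (hF.comp_quasiMeasurePreserving
      (Measure.quasiMeasurePreserving_smul μ hr)).aestronglyMeasurable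
  · filter_upwards [eventually_gt_atTop 0] with x hx
    refine .of_forall fun u ↦ ?_
    have hnonneg (t : E) : 0 ≤ F x t := Set.indicator_nonneg (fun _ _ ↦ (exp_pos _).le) t
    rw [norm_of_nonneg (hnonneg _)]
    refine Set.indicator_apply_le' (fun ht ↦ ?_) fun _ ↦ (exp_pos _).le
    rw [exp_le_exp, neg_mul, neg_le_neg_iff, ← mul_norm_smul_rpow hx hp.ne', mul_left_comm]
    gcongr
    exact hle _ ht
  · refine Tendsto.congr' ?_
      ((continuous_exp.tendsto _).comp (tendsto_mul_comp_smul hp hφ u).neg)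
    filter_upwards [(tendsto_inv_rpow_inv_smul hp u).eventually_mem hS0] with x hx
    exact (Set.indicator_of_mem hx fun t ↦ exp (-(x * φ t))).symm

theorem tendsto_rpow_mul_integral_exp_neg_mul [Nontrivial E] {φ : E → ℝ} {a p : ℝ} (ha : 0 < a)
    (hp : 0 < p) (hφ : φ ~[𝓝 0] fun t ↦ a * ‖t‖ ^ p)
    (hpos : ∀ δ > 0, ∃ m > 0, ∀ t, δ ≤ ‖t‖ → m ≤ φ t)
    (hint : Integrable (fun t ↦ exp (-φ t)) μ) :
    Tendsto (fun x : ℝ ↦ x ^ (finrank ℝ E / p) * ∫ t, exp (-(x * φ t)) ∂μ) atTop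
      (𝓝 (∫ u, exp (-(a * ‖u‖ ^ p)) ∂μ)) := by
  -- Off a ball around `0` the integral is exponentially small; on the ball, rescale by `x ^ p⁻¹`
  -- and dominate by `exp (-(a / 2) * ‖u‖ ^ p)`.
  obtain ⟨δ, hδ, hnear⟩ := exists_ball_half_mul_norm_rpow_le ha.le hφ
  obtain ⟨m, hm, hfar⟩ := hpos δ hδ
  have hmeas : AEMeasurable φ μ := by
    simpa only [log_exp, Pi.neg_def, neg_neg] using hint.aemeasurable.log.neg
  have hball : MeasurableSet (Metric.ball (0 : E) δ) := measurableSet_ball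
  have hnonneg (t : E) : 0 ≤ φ t := by
    rcases lt_or_ge ‖t‖ δ with ht | ht
    · exact le_trans (by positivity) (hnear t (mem_ball_zero_iff.2 ht))
    · exact hm.le.trans (hfar t ht)
  have hintegrable {x : ℝ} (hx : 1 ≤ x) : Integrable (fun t ↦ exp (-(x * φ t))) μ := by
    refine hint.mono' (hmeas.const_mul x).neg.exp.aestronglyMeasurable (.of_forall fun t ↦ ?_)
    rw [norm_of_nonneg (exp_pos _).le, exp_le_exp, neg_le_neg_iff]
    exact le_mul_of_one_le_left (hnonneg t) hx
  have hlim := (tendsto_rpow_mul_setIntegral_exp_neg_mul hball (Metric.ball_mem_nhds 0 hδ)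
      (half_pos ha) hp hφ hnear hmeas).add
    (tendsto_rpow_mul_setIntegral_exp_neg_mul_zero (finrank ℝ E / p) hball.compl hm
      (fun t ht ↦ hfar t (by simpa using ht)) hint.integrableOn)
  rw [add_zero] at hlim
  refine hlim.congr' ?_
  filter_upwards [eventually_ge_atTop 1] with x hx
  rw [← mul_add, integral_add_compl hball (hintegrable hx)]

end Laplace

theorem norm_rpow_four (u : ℝ) : ‖u‖ ^ (4 : ℝ) = u ^ 4 := by
  rw [norm_eq_abs, ← Nat.cast_ofNat, rpow_natCast, Even.pow_abs (by decide)]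

theorem integral_exp_neg_mul_abs_rpow {b p : ℝ} (hb : 0 < b) (hp : 0 < p) :
    ∫ u : ℝ, exp (-(b * |u| ^ p)) = 2 * (b ^ (-1 / p) * Gamma (1 / p + 1)) := by
  rw [integral_comp_abs (f := fun r ↦ exp (-(b * r ^ p)))]
  simp only [← neg_mul, integral_exp_neg_mul_rpow hp hb]

theorem integral_exp_neg_pow_four_div_twelve :
    ∫ u : ℝ, exp (-u ^ 4 / 12) = (12 : ℝ) ^ ((1 : ℝ) / 4) * Gamma (1 / 4) / 2 := by
  have h := integral_exp_neg_mul_abs_rpow (b := 1 / 12) (p := 4) (by norm_num) (by norm_num)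
  have hscale : (1 / 12 : ℝ) ^ (-1 / 4 : ℝ) = 12 ^ (1 / 4 : ℝ) := by
    rw [one_div, inv_rpow (by norm_num), ← rpow_neg (by norm_num), neg_div, neg_neg]
  simp only [← norm_eq_abs, norm_rpow_four, hscale,
    Gamma_add_one (one_div_ne_zero four_ne_zero)] at h
  convert h using 1
  · simp only [neg_div, one_div_mul_eq_div]
  · ring

section HubbardStratonovich

theorem neg_mul_sq_add_mul_eq {b : ℝ} (hb : b ≠ 0) (c t : ℝ) :
    -b * t ^ 2 + c * t = c ^ 2 / (4 * b) + -b * (t - c / (2 * b)) ^ 2 := by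
  field_simp
  ring

theorem integrable_exp_neg_mul_sq_add_mul {b : ℝ} (hb : 0 < b) (c : ℝ) :
    Integrable fun t : ℝ ↦ exp (-b * t ^ 2 + c * t) := by
  simp only [neg_mul_sq_add_mul_eq hb.ne', exp_add]
  exact ((integrable_exp_neg_mul_sq hb).comp_sub_right _).const_mul _

theorem integral_exp_neg_mul_sq_add_mul {b : ℝ} (hb : 0 < b) (c : ℝ) :
    ∫ t : ℝ, exp (-b * t ^ 2 + c * t) = exp (c ^ 2 / (4 * b)) * √(π / b) := by
  simp only [neg_mul_sq_add_mul_eq hb.ne', exp_add]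
  rw [integral_const_mul, integral_sub_right_eq_self (fun t : ℝ ↦ exp (-b * t ^ 2)),
    integral_gaussian]

variable {ι α : Type*} [Fintype ι] [DecidableEq ι] [Fintype α]

theorem sum_exp_mul_sum_comp (s : α → ℝ) (t : ℝ) :
    ∑ σ : ι → α, exp ((∑ i, s (σ i)) * t) = (∑ a, exp (s a * t)) ^ Fintype.card ι := by
  simp only [Finset.sum_mul, exp_sum]
  rw [← Finset.card_univ, ← Finset.prod_const, Fintype.prod_sum]

theorem sum_exp_sq_sum_comp_eq_integral (s : α → ℝ) {b : ℝ} (hb : 0 < b) :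
    ∑ σ : ι → α, exp ((∑ i, s (σ i)) ^ 2 / (4 * b)) =
      √(b / π) * ∫ t : ℝ, exp (-b * t ^ 2) * (∑ a, exp (s a * t)) ^ Fintype.card ι := by
  have hweight (c : ℝ) : exp (c ^ 2 / (4 * b)) = √(b / π) * ∫ t : ℝ, exp (-b * t ^ 2 + c * t) := by
    rw [integral_exp_neg_mul_sq_add_mul hb, mul_left_comm, ← sqrt_mul (by positivity),
      div_mul_div_cancel₀ pi_ne_zero, div_self hb.ne', sqrt_one, mul_one]
  simp only [hweight, ← sum_exp_mul_sum_comp, Finset.mul_sum, ← exp_add]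
  rw [integral_finsetSum _ fun σ _ ↦ integrable_exp_neg_mul_sq_add_mul hb _, Finset.mul_sum]

end HubbardStratonovich

theorem strictMonoOn_Ici_of_hasDerivAt_pos {f f' : ℝ → ℝ} {a : ℝ}
    (hf : ∀ t, HasDerivAt f (f' t) t) (hpos : ∀ t, a < t → 0 < f' t) :
    StrictMonoOn f (Set.Ici a) :=
  strictMonoOn_of_hasDerivWithinAt_pos (convex_Ici a)
    (fun t _ ↦ (hf t).continuousAt.continuousWithinAt) (fun t _ ↦ (hf t).hasDerivWithinAt)
    fun t ht ↦ hpos t (by simpa using ht)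

section Tanh

theorem tanh_pos {t : ℝ} (ht : 0 < t) : 0 < tanh t := by
  rw [tanh_eq_sinh_div_cosh]
  exact div_pos (sinh_pos_iff.2 ht) (cosh_pos t)

theorem hasDerivAt_tanh (t : ℝ) : HasDerivAt tanh (1 - tanh t ^ 2) t := by
  have hcosh : cosh t ≠ 0 := (cosh_pos t).ne'
  have h := (hasDerivAt_sinh t).fun_div (hasDerivAt_cosh t) hcosh
  simp only [← tanh_eq_sinh_div_cosh] at h
  refine h.congr_deriv ?_
  rw [tanh_eq_sinh_div_cosh]
  field_simp

theorem hasDerivAt_sub_tanh (t : ℝ) : HasDerivAt (fun t ↦ t - tanh t) (tanh t ^ 2) t := by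
  simpa only [sub_sub_cancel] using (hasDerivAt_id' t).fun_sub (hasDerivAt_tanh t)

theorem tanh_lt_self {t : ℝ} (ht : 0 < t) : tanh t < t := by
  have hmono := strictMonoOn_Ici_of_hasDerivAt_pos (a := 0) hasDerivAt_sub_tanh fun t ht ↦
    sq_pos_of_pos (tanh_pos ht)
  simpa using hmono Set.self_mem_Ici ht.le ht

theorem tendsto_tanh_div_self : Tendsto (fun t ↦ tanh t / t) (𝓝[≠] 0) (𝓝 1) := by
  simpa [div_eq_inv_mul] using (hasDerivAt_tanh 0).tendsto_slope_zero

end Tanh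

section CriticalPotential

/-- The rate function of the Hubbard–Stratonovich integral at `β = 1`, `h = 0`: the integrand is
`(2 * exp (-t ^ 2 / 2) * cosh t) ^ N = 2 ^ N * exp (-(N * criticalPotential t))`. -/
noncomputable def criticalPotential (t : ℝ) : ℝ := t ^ 2 / 2 - log (cosh t)

theorem criticalPotential_zero : criticalPotential 0 = 0 := by simp [criticalPotential]

theorem criticalPotential_abs (t : ℝ) : criticalPotential |t| = criticalPotential t := by
  simp only [criticalPotential, sq_abs, cosh_abs]

theorem hasDerivAt_criticalPotential (t : ℝ) :
    HasDerivAt criticalPotential (t - tanh t) t := by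
  have hsq : HasDerivAt (fun t : ℝ ↦ t ^ 2 / 2) t t := by
    simpa using (hasDerivAt_pow 2 t).div_const 2
  rw [tanh_eq_sinh_div_cosh]
  exact hsq.fun_sub ((hasDerivAt_cosh t).log (cosh_pos t).ne')

theorem strictMonoOn_criticalPotential : StrictMonoOn criticalPotential (Set.Ici 0) :=
  strictMonoOn_Ici_of_hasDerivAt_pos hasDerivAt_criticalPotential fun _ ht ↦
    sub_pos.2 (tanh_lt_self ht)

theorem exists_pos_forall_le_criticalPotential {δ : ℝ} (hδ : 0 < δ) :
    ∃ m > 0, ∀ t, δ ≤ ‖t‖ → m ≤ criticalPotential t := by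
  refine ⟨criticalPotential δ, ?_, fun t ht ↦ ?_⟩
  · simpa only [criticalPotential_zero] using
      strictMonoOn_criticalPotential Set.self_mem_Ici hδ.le hδ
  · rw [← criticalPotential_abs t]
    exact strictMonoOn_criticalPotential.monotoneOn hδ.le (abs_nonneg t) ht

theorem tendsto_criticalPotential_div_pow_four :
    Tendsto (fun t ↦ criticalPotential t / t ^ 4) (𝓝[≠] 0) (𝓝 (1 / 12)) := by
  have hne : ∀ᶠ t : ℝ in 𝓝[≠] 0, t ≠ 0 := eventually_mem_nhdsWithin
  have hpow (c : ℝ) {n : ℕ} (hn : n ≠ 0) : Tendsto (fun t : ℝ ↦ c * t ^ n) (𝓝[≠] 0) (𝓝 0) := by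
    refine tendsto_nhdsWithin_of_tendsto_nhds (Continuous.tendsto' (by fun_prop) _ _ ?_)
    simp [hn]
  have hsecond : Tendsto (fun t ↦ tanh t ^ 2 / (12 * t ^ 2)) (𝓝[≠] 0) (𝓝 (1 / 12)) := by
    simpa [div_pow, div_div, mul_comm] using (tendsto_tanh_div_self.pow 2).div_const 12
  have hfirst : Tendsto (fun t ↦ (t - tanh t) / (4 * t ^ 3)) (𝓝[≠] 0) (𝓝 (1 / 12)) := by
    refine HasDerivAt.lhopital_zero_nhdsNE (.of_forall hasDerivAt_sub_tanh)
      (.of_forall fun t ↦ ((hasDerivAt_pow 3 t).const_mul 4).congr_deriv (by ring)) ?_ ?_ ?_ hsecond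
    · filter_upwards [hne] with t ht using by positivity
    · simpa using (hasDerivAt_sub_tanh 0).continuousAt.tendsto.mono_left nhdsWithin_le_nhds
    · exact hpow 4 three_ne_zero
  refine HasDerivAt.lhopital_zero_nhdsNE (.of_forall hasDerivAt_criticalPotential)
    (.of_forall fun t ↦ (hasDerivAt_pow 4 t).congr_deriv (by norm_num)) ?_ ?_ ?_ hfirst
  · filter_upwards [hne] with t ht using by positivity
  · simpa [criticalPotential_zero] using
      (hasDerivAt_criticalPotential 0).continuousAt.tendsto.mono_left nhdsWithin_le_nhds
  · simpa using hpow 1 four_ne_zero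

theorem criticalPotential_isEquivalent :
    criticalPotential ~[𝓝 0] fun t ↦ 1 / 12 * ‖t‖ ^ (4 : ℝ) := by
  simp only [norm_rpow_four]
  have hratio : Tendsto (criticalPotential / fun t ↦ 1 / 12 * t ^ 4) (𝓝[≠] 0) (𝓝 1) := by
    have h := tendsto_criticalPotential_div_pow_four.div_const (1 / 12)
    rw [div_self (by norm_num)] at h
    exact h.congr fun t ↦ by rw [div_div, mul_comm (t ^ 4), Pi.div_apply]
  have hpunctured := (isEquivalent_of_tendsto_one hratio).isLittleO.insert
    (by simp [criticalPotential_zero])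
  rwa [Set.insert_eq, Set.union_compl_self, nhdsWithin_univ] at hpunctured

theorem exp_neg_mul_criticalPotential (x t : ℝ) :
    exp (-(x * criticalPotential t)) = exp (-(x / 2) * t ^ 2) * cosh t ^ x := by
  rw [rpow_def_of_pos (cosh_pos t), ← exp_add, criticalPotential]
  ring_nf

theorem integrable_exp_neg_criticalPotential : Integrable fun t ↦ exp (-criticalPotential t) := by
  have hsum := (integrable_exp_neg_mul_sq_add_mul one_half_pos 1).add
    (integrable_exp_neg_mul_sq_add_mul one_half_pos (-1))
  refine (hsum.div_const 2).congr (.of_forall fun t ↦ ?_)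
  have h := exp_neg_mul_criticalPotential 1 t
  rw [one_mul, rpow_one, cosh_eq] at h
  simp only [Pi.add_apply, exp_add, one_mul, neg_one_mul]
  rw [h]
  ring

theorem tendsto_rpow_mul_integral_exp_neg_mul_criticalPotential :
    Tendsto (fun x : ℝ ↦ x ^ (1 / 4 : ℝ) * ∫ t, exp (-(x * criticalPotential t))) atTop
      (𝓝 (∫ u : ℝ, exp (-u ^ 4 / 12))) := by
  have h := tendsto_rpow_mul_integral_exp_neg_mul (by norm_num) four_pos
    criticalPotential_isEquivalent (fun _ ↦ exists_pos_forall_le_criticalPotential)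
    integrable_exp_neg_criticalPotential
  simpa only [Module.finrank_self, Nat.cast_one, norm_rpow_four, one_div_mul_eq_div,
    neg_div] using h

theorem sum_exp_sq_sum_spin_eq_integral {spin : Bool → ℝ}
    (hspin : ∀ b, spin b = if b then 1 else -1) {N : ℕ} (hN : 0 < N) :
    ∑ σ : Fin N → Bool, exp (1 / (2 * N) * ∑ i, ∑ j, spin (σ i) * spin (σ j)) =
      2 ^ N * √(N / (2 * π)) * ∫ t, exp (-(N * criticalPotential t)) := by
  have hN' : (0 : ℝ) < N := Nat.cast_pos.2 hN
  have hsq (σ : Fin N → Bool) : 1 / (2 * N) * ∑ i, ∑ j, spin (σ i) * spin (σ j) =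
      (∑ i, spin (σ i)) ^ 2 / (4 * (N / 2 : ℝ)) := by
    rw [← Finset.sum_mul_sum]
    ring
  have hcosh (t : ℝ) : ∑ b, exp (spin b * t) = 2 * cosh t := by
    simp only [Fintype.sum_bool, hspin, cosh_eq, if_true, Bool.false_eq_true, if_false, one_mul,
      neg_one_mul]
    ring
  simp only [hsq, sum_exp_sq_sum_comp_eq_integral spin (half_pos hN'), hcosh,
    exp_neg_mul_criticalPotential, rpow_natCast, Fintype.card_fin, mul_pow, div_div]
  simp only [mul_left_comm _ ((2 : ℝ) ^ N), integral_const_mul]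
  ring

end CriticalPotential

/-- For the critical Curie–Weiss model (`β = 1`, `h = 0`), the partition
function satisfies `lim_N Z_N/(2^N N^{1/4}) = (2π)^{−1/2} ∫ exp(−u⁴/12) du
= 12^{1/4} Γ(1/4)/(2√(2π))`. Spins `±1` are encoded by `Bool` via `spin`. -/
theorem stmt_10
    (spin : Bool → ℝ) (hspin : ∀ b, spin b = if b then 1 else -1)
    (Z : ℕ → ℝ)
    (hZ : ∀ N : ℕ, Z N = ∑ σ : Fin N → Bool,
      Real.exp (1 / (2 * N) * ∑ i, ∑ j, spin (σ i) * spin (σ j))) :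
    Tendsto (fun N : ℕ => Z N / (2 ^ N * (N : ℝ) ^ ((1 : ℝ) / 4))) atTop
        (nhds ((Real.sqrt (2 * Real.pi))⁻¹ * ∫ u : ℝ, Real.exp (-u ^ 4 / 12))) ∧
      (Real.sqrt (2 * Real.pi))⁻¹ * (∫ u : ℝ, Real.exp (-u ^ 4 / 12)) =
        (12 : ℝ) ^ ((1 : ℝ) / 4) * Real.Gamma (1 / 4) / (2 * Real.sqrt (2 * Real.pi)) := by
  refine ⟨?_, by rw [integral_exp_neg_pow_four_div_twelve]; field_simp⟩
  refine ((tendsto_rpow_mul_integral_exp_neg_mul_criticalPotential.comp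
    tendsto_natCast_atTop_atTop).const_mul (√(2 * π))⁻¹).congr' ?_
  filter_upwards [eventually_gt_atTop 0] with N hN
  have hsqrt : √(N : ℝ) = (N : ℝ) ^ (1 / 4 : ℝ) * (N : ℝ) ^ (1 / 4 : ℝ) := by
    rw [← rpow_add (Nat.cast_pos.2 hN), sqrt_eq_rpow]
    norm_num
  rw [hZ, sum_exp_sq_sum_spin_eq_integral hspin hN, sqrt_div' _ (by positivity), hsqrt,
    Function.comp_apply]
  field_simp
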